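/- Let n, r ∈ ℕ with r ≥ 3 and r dividing n, and let D ∈ ℕ with r−1 ≤ D ≤ (r−1)n/r − 1. Define g(n,r,D) := max{ C(n,2) − C(n/r+1, 2), D(n−D) + C(n−1−D, 2) + e(T(D, r−2)) }. Then every graph G on n vertices with minimum degree δ(G) ≥ D and e(G) > g(n,r,D) contains a perfect K_r-packing. Moreover, there exists a graph G' on n vertices with δ(G') ≥ D and e(G') = g(n,r,D) that contains no perfect K_r-packing. -/

import Mathlib

/-- The number of edges of a graph. -/
noncomputable def edgeCount {V : Type*} (G : SimpleGraph V) : ℕ := Nat.card G.edgeSet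

/-- The degree of a vertex. -/
noncomputable def deg {V : Type*} (G : SimpleGraph V) (v : V) : ℕ := Nat.card (G.neighborSet v)

/-- A perfect `K_r`-packing: a collection of vertex-disjoint `r`-cliques covering all vertices. -/
def HasPerfectKrPacking {n : ℕ} (G : SimpleGraph (Fin n)) (r : ℕ) : Prop :=
  ∃ P : Finset (Finset (Fin n)),
    (∀ p ∈ P, p.card = r ∧ G.IsClique (p : Set (Fin n))) ∧
    (P : Set (Finset (Fin n))).PairwiseDisjoint id ∧
    P.biUnion id = Finset.univ

/-- `g(n,r,D)` where `e(T(D, r-2))` is the number of edges of the Turán graph. -/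
noncomputable def gFun (n r D : ℕ) : ℕ :=
  max (Nat.choose n 2 - Nat.choose (n / r + 1) 2)
    (D * (n - D) + Nat.choose (n - 1 - D) 2 + edgeCount (SimpleGraph.turanGraph D (r - 2)))


/-- number of missing edges of the Turan graph -/
def Mk (D k : ℕ) : ℕ := ∑ i ∈ Finset.range D, i / k

lemma Mk_succ (D k : ℕ) : Mk (D+1) k = Mk D k + D / k := Finset.sum_range_succ _ _

lemma Mk_closed (k : ℕ) (hk : 1 ≤ k) (D : ℕ) :
    2 * Mk D k + k * ((D / k) * (D / k + 1)) = 2 * (D / k) * D := by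
  induction D with
  | zero => simp [Mk]
  | succ D ih =>
    rw [Mk_succ]
    have h1 := Nat.div_add_mod D k
    have h2 := Nat.mod_lt D (show k > 0 by omega)
    rw [Nat.succ_div]
    generalize D / k = q at *
    generalize D % k = s at *
    split_ifs with h
    · have : s + 1 = k := by
        rw [← h1, add_assoc] at h
        have h3 := (Nat.dvd_add_right (Dvd.intro q rfl)).1 h
        have := Nat.le_of_dvd (by omega) h3
        omega
      have h4 : D + 1 = k * (q + 1) := by rw [← h1, ← this]; ring
      have h5 : (D:ℤ) = k * (q + 1) - 1 := by
        have : ((D + 1 : ℕ) : ℤ) = ((k * (q+1) : ℕ) : ℤ) := by rw [h4]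
        push_cast at this; linarith
      zify at ih ⊢
      rw [h5] at ih ⊢
      linear_combination ih
    · zify at ih ⊢
      linear_combination ih

lemma Mk_lower (k : ℕ) (hk : 1 ≤ k) (D p : ℕ) :
    2 * p * D ≤ 2 * Mk D k + k * (p * (p + 1)) := by
  have h0 := Mk_closed k hk D
  have h1 := Nat.div_add_mod D k
  have h2 := Nat.mod_lt D (show k > 0 by omega)
  generalize D / k = q at *
  generalize D % k = s at *
  generalize Mk D k = X at *
  subst h1
  rcases lt_trichotomy p q with h | h | h
  · obtain ⟨u, rfl⟩ := Nat.exists_eq_add_of_lt h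
    zify at *
    have e1 : (0:ℤ) ≤ (u + 1) * (k * u) := by positivity
    have e2 : (0:ℤ) ≤ (u + 1) * s := by positivity
    nlinarith
  · subst h; omega
  · obtain ⟨u, rfl⟩ := Nat.exists_eq_add_of_lt h
    have h3 : s + 1 ≤ k := h2
    zify at *
    have e1 : (0:ℤ) ≤ (u + 1) * (k - s) := by
      apply mul_nonneg <;> linarith
    have e2 : (0:ℤ) ≤ (u + 1) * (k * u) := by positivity
    nlinarith

lemma Mk_mono (k : ℕ) {D D' : ℕ} (h : D ≤ D') : Mk D k ≤ Mk D' k := by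
  unfold Mk
  exact Finset.sum_le_sum_of_subset (Finset.range_mono h)

lemma Mk_add (k : ℕ) (hk : 1 ≤ k) (D : ℕ) : Mk (D + k) k = Mk D k + D := by
  have h1 := Mk_closed k hk D
  have h2 := Mk_closed k hk (D + k)
  rw [Nat.add_div_right D (by omega)] at h2
  zify at *
  nlinarith

lemma Mk_turan_step (k : ℕ) (a b : ℕ) (h : k = 0 → b = 0) :
    2 * Mk (a + b) (k+1) ≤ a * (a - 1) + 2 * Mk b k := by
  have h0 := Mk_closed (k+1) (by omega) (a+b)
  generalize (a+b) / (k+1) = q at *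
  have h1 : 2 * q * b ≤ 2 * Mk b k + k * (q * (q+1)) := by
    rcases Nat.eq_zero_or_pos k with hk | hk
    · simp [h hk]
    · exact Mk_lower k hk b q
  have h2 : 2 * q * a ≤ a * (a-1) + q * (q+1) := by
    rcases Nat.eq_zero_or_pos a with ha | ha
    · simp [ha]
    · obtain ⟨c, rfl⟩ := Nat.exists_eq_add_of_le' ha
      simp only [Nat.add_sub_cancel]
      rcases lt_or_ge q (c+1) with h | h
      · obtain ⟨u, rfl⟩ := Nat.exists_eq_add_of_le (Nat.lt_succ_iff.1 h)
        nlinarith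
      · obtain ⟨u, rfl⟩ := Nat.exists_eq_add_of_le h
        nlinarith
  nlinarith

lemma Mk_auto (k m d D : ℕ) (hk : 1 ≤ k) (hd : d < m) (hD : D + d + 1 = (k+2) * m) :
    m * (m + 1) ≤ 2 * Mk D k := by
  have h := Mk_lower k hk D m
  have h1 : (k+1) * m ≤ D := by nlinarith
  have h2 := Nat.mul_le_mul_left (2 * m) h1
  obtain ⟨c, rfl⟩ := Nat.exists_eq_add_of_le' (show 1 ≤ m by omega)
  nlinarith [Nat.zero_le (k * c * (c+1)), Nat.zero_le (k*c)]

lemma num0 (k M d0 d1 D0 D1 E E1 : ℕ) (hk : 1 ≤ k) (hD1 : D1 + d1 + 1 = (k+2) * M)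
    (h01 : d1 ≤ d0) (hD0 : D0 + d0 + 1 = (k+2) * (M+1))
    (hE : 2 * (d0 + (k+1) * d1) + E1 ≤ E) (hE1 : 2 * (d1 + Mk D1 k) ≤ E1)
    (hE0 : E < 2 * (d0 + Mk D0 k)) (hEm : E < (M+1) * (M+2)) (hd1 : M ≤ d1) : False := by
  have hle : D0 ≤ D1 + k + 1 + 1 := by nlinarith
  have h1 := Mk_mono k hle
  rw [Mk_succ, Mk_succ, Mk_add k hk] at h1
  have h2 : (D1 + k) / k = D1 / k + 1 := Nat.add_div_right D1 (by omega)
  have h3 : (D1 + k + 1) / k ≤ D1 / k + 2 := by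
    calc (D1 + k + 1) / k ≤ (D1 + k + k) / k := Nat.div_le_div_right (by omega)
      _ = _ := by rw [Nat.add_div_right _ (by omega), h2]
  have h4 := Nat.div_add_mod D1 k
  have h5 := Nat.mod_lt D1 (show k > 0 by omega)
  have hc := Mk_closed k hk D1
  generalize D1 / k = q at *
  generalize D1 % k = s at *
  have hM : 1 ≤ M := by
    rcases Nat.eq_zero_or_pos M with h | h
    · subst h; omega
    · exact h
  have h6 : (k+2) * d1 ≤ D1 + 2 * q + 2 := by nlinarith
  have hq : M ≤ q := by
    by_contra hcon
    push Not at hcon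
    -- (k+2)(k+1)(q+1) - 1 ≥ (k+2)^2 M
    have h7 : (k+2) * ((k+2) * M) ≤ (k+2) * (D1 + d1 + 1) := by rw [hD1]
    have h8 : (k + 2) * (k+1) * (q+1) ≤ (k+2) * (k+1) * M := Nat.mul_le_mul_left _ hcon
    nlinarith
  have h9 : 2 * M * D1 ≤ 2 * Mk D1 k + k * (M * (M+1)) := Mk_lower k hk D1 M
  have h10 : k * M ≤ D1 := by nlinarith
  have h11 := Nat.mul_le_mul_left (2 * M) h10
  have h12 : (k+2) * M ≤ (k+2) * d1 := Nat.mul_le_mul_left _ hd1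
  obtain ⟨c, rfl⟩ := Nat.exists_eq_add_of_le' hM
  obtain ⟨j, rfl⟩ := Nat.exists_eq_add_of_le' hk
  nlinarith [Nat.zero_le (j * c * c), Nat.zero_le (j*c)]

lemma num1 (k M d0 d1 D0 D1 E E1 : ℕ) (hk : 1 ≤ k) (hD1 : D1 + d1 + 1 = (k+2) * M)
    (h01 : d1 + 1 ≤ d0) (hD0 : D0 + d0 + 1 = (k+2) * (M+1))
    (hE : 2 * d0 + E1 ≤ E) (hE1 : 2 * (d1 + Mk D1 k) ≤ E1)
    (hE0 : E < 2 * (d0 + Mk D0 k)) (hEm : E < (M+1) * (M+2)) (hd1 : M ≤ d1) : False := by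
  have hle : D0 ≤ D1 + k + 1 := by nlinarith
  have h1 := Mk_mono k hle
  rw [Mk_succ, Mk_add k hk] at h1
  have h2 : (D1 + k) / k = D1 / k + 1 := Nat.add_div_right D1 (by omega)
  have h4 := Nat.div_add_mod D1 k
  have h5 := Nat.mod_lt D1 (show k > 0 by omega)
  have hc := Mk_closed k hk D1
  have hlow := Mk_lower k hk D1 M
  generalize D1 / k = q at *
  generalize D1 % k = s at *
  have h6 : d1 ≤ D1 + q := by omega
  rcases le_or_gt M q with hq | hq
  · have h10 : k * M ≤ D1 := by nlinarith
    have h11 := Nat.mul_le_mul_left (2 * M) h10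
    have hM : 1 ≤ M := by
      rcases Nat.eq_zero_or_pos M with h | h
      · subst h; omega
      · exact h
    obtain ⟨c, rfl⟩ := Nat.exists_eq_add_of_le' hM
    obtain ⟨j, rfl⟩ := Nat.exists_eq_add_of_le' hk
    nlinarith [Nat.zero_le (j * c * c), Nat.zero_le (j*c)]
  · obtain ⟨w, rfl⟩ := Nat.exists_eq_add_of_lt hq
    -- M = q + w + 1, p = w + 1
    generalize Mk D1 k = X at *
    subst h4
    have hs : s + 1 ≤ k := h5
    -- k (q - p + 2) ≥ q + 2 p + 1
    have hk1 : k * (w + 1) + q + 2 * (w+1) + 1 ≤ k * (q + 2) := by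
      zify at *
      nlinarith
    have hqw : w ≤ q := by
      by_contra hcon
      push Not at hcon
      have : k * (q + 2) ≤ k * (w + 1) := Nat.mul_le_mul_left _ (by omega)
      omega
    obtain ⟨u, rfl⟩ := Nat.exists_eq_add_of_le hqw
    have hk2 : 3 * w + 3 + u ≤ k * (u + 1) := by nlinarith
    -- positivity
    have hw : ((w:ℤ)+u) * (w + u - 1) * k ≤ 2 * X := by
      have e : (0:ℤ) ≤ 2 * s * (w + u) := by positivity
      zify at hc
      clear * - hc e
      linarith
    have hY : (0:ℤ) ≤ 4 * w + (w+u) * (w+u-1) := by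
      rcases Nat.eq_zero_or_pos (w+u) with h | h
      · have : (w:ℤ) + u = 0 := by exact_mod_cast h
        rw [this]; positivity
      · have : (0:ℤ) ≤ (w:ℤ) + u - 1 := by zify at h; linarith
        positivity
    zify at hk2 hD1 hE hE1 hEm hs h01
    have hmain : (k:ℤ) * (4 * w + (w+u) * (w+u-1)) < (2*w+1+u) * (2*w+u-4) := by
      clear * - hw hD1 hE hE1 hEm hs h01 hc
      have e : (0:ℤ) ≤ 2 * s * (w + u) := by positivity
      zify at hc
      linarith
    have hA := mul_le_mul_of_nonneg_right hk2 hY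
    have hB := mul_lt_mul_of_pos_right hmain (show (0:ℤ) < u + 1 by positivity)
    have hC : (0:ℤ) ≤ 3*w^3+3*w^2*u+w*u^2+8*w^2+8*w*u+4*u^2+15*w+4*u+4 := by positivity
    clear * - hA hB hC
    linarith

open Classical in
/-- degree inside `A` -/
noncomputable def dg {V : Type*} (H : SimpleGraph V) (A : Finset V) (x : V) : ℕ :=
  (A.filter (fun y => H.Adj x y)).card

/-- twice the number of edges inside `A` -/
noncomputable def EE {V : Type*} (H : SimpleGraph V) (A : Finset V) : ℕ := ∑ x ∈ A, dg H A x

/-- independent set -/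
def Ind {V : Type*} (H : SimpleGraph V) (S : Finset V) : Prop := ∀ x ∈ S, ∀ y ∈ S, ¬ H.Adj x y

section graph
variable {V : Type*} [DecidableEq V] (H : SimpleGraph V)

lemma dg_mono {A B : Finset V} (h : A ⊆ B) (x : V) : dg H A x ≤ dg H B x := by
  classical
  unfold dg
  exact Finset.card_le_card (Finset.filter_subset_filter _ h)

lemma EE_mono {A B : Finset V} (h : A ⊆ B) : EE H A ≤ EE H B := by
  unfold EE
  calc ∑ x ∈ A, dg H A x ≤ ∑ x ∈ A, dg H B x := Finset.sum_le_sum (fun x _ => dg_mono H h x)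
    _ ≤ _ := Finset.sum_le_sum_of_subset h

lemma dg_split {A S : Finset V} (h : S ⊆ A) (x : V) : dg H A x = dg H (A \ S) x + dg H S x := by
  classical
  unfold dg
  rw [← Finset.card_union_of_disjoint]
  · congr 1
    rw [← Finset.filter_union, Finset.sdiff_union_of_subset h]
  · exact Finset.disjoint_filter_filter Finset.sdiff_disjoint

lemma dg_comm (A B : Finset V) : ∑ x ∈ A, dg H B x = ∑ y ∈ B, dg H A y := by
  classical
  unfold dg
  simp_rw [Finset.card_filter]
  rw [Finset.sum_comm]
  simp_rw [H.adj_comm]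

lemma dg_ind {S : Finset V} (hS : Ind H S) {x : V} (hx : x ∈ S) : dg H S x = 0 := by
  classical
  unfold dg
  rw [Finset.card_eq_zero, Finset.filter_eq_empty_iff]
  exact fun y hy => hS x hx y hy

lemma sum_cross {A S : Finset V} (h : S ⊆ A) (hS : Ind H S) :
    ∑ x ∈ A \ S, dg H S x = ∑ x ∈ S, dg H A x := by
  rw [dg_comm]
  refine Finset.sum_congr rfl fun x hx => ?_
  rw [dg_split H h, dg_ind H hS hx, add_zero]

lemma EE_split {A S : Finset V} (h : S ⊆ A) (hS : Ind H S) :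
    EE H A = EE H (A \ S) + 2 * ∑ x ∈ S, dg H A x := by
  have h1 : EE H A = ∑ x ∈ A \ S, dg H A x + ∑ x ∈ S, dg H A x :=
    (Finset.sum_sdiff h).symm
  have h2 : ∑ x ∈ A \ S, dg H A x = EE H (A \ S) + ∑ x ∈ A \ S, dg H S x := by
    unfold EE
    rw [← Finset.sum_add_distrib]
    exact Finset.sum_congr rfl fun x _ => dg_split H h x
  rw [h1, h2, sum_cross H h hS]; ring

/-- Turan's theorem -/
lemma turan_lower (k : ℕ) : ∀ N : Finset V,
    (∀ S ⊆ N, Ind H S → S.card ≠ k + 1) → 2 * Mk N.card (k) ≤ EE H N := by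
  classical
  induction k with
  | zero =>
    intro N hN
    have : N = ∅ := by
      by_contra h
      obtain ⟨x, hx⟩ := Finset.nonempty_iff_ne_empty.2 h
      refine hN {x} (by simpa using hx) ?_ (by simp)
      intro a ha b hb
      simp only [Finset.mem_singleton] at ha hb
      subst ha; subst hb; exact H.irrefl
    subst this; simp [Mk]
  | succ k ih =>
    intro N hN
    rcases N.eq_empty_or_nonempty with h | h
    · subst h; simp [Mk]
    obtain ⟨x, hx, hmin⟩ := Finset.exists_min_image N (dg H N) h
    set B := insert x (N.filter (fun y => H.Adj x y)) with hB
    have hBN : B ⊆ N := by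
      intro y hy
      rw [hB, Finset.mem_insert, Finset.mem_filter] at hy
      rcases hy with rfl | hy
      · exact hx
      · exact hy.1
    have hBc : B.card = dg H N x + 1 := by
      rw [hB, Finset.card_insert_of_notMem (by simp)]; rfl
    have hind : ∀ S ⊆ N \ B, Ind H S → S.card ≠ k + 1 := by
      intro S hSN hS hc
      have hnot : ∀ y ∈ S, ¬ H.Adj x y ∧ y ≠ x := by
        intro y hy
        have := hSN hy
        simp only [hB, Finset.mem_sdiff, Finset.mem_insert, Finset.mem_filter, not_or,
          not_and] at this
        exact ⟨this.2.2 this.1, this.2.1⟩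
      refine hN (insert x S) ?_ ?_ ?_
      · intro y hy
        rcases Finset.mem_insert.1 hy with rfl | hy
        · exact hx
        · exact (Finset.mem_sdiff.1 (hSN hy)).1
      · intro a ha b hb
        rcases Finset.mem_insert.1 ha with rfl | ha1 <;> rcases Finset.mem_insert.1 hb with rfl | hb1
        · exact H.irrefl
        · exact (hnot b hb1).1
        · exact fun h => (hnot a ha1).1 h.symm
        · exact hS a ha1 b hb1
      · rw [Finset.card_insert_of_notMem (fun h => (hnot x h).2 rfl), hc]
    have h1 := ih _ hind
    have hcard : N.card = B.card + (N \ B).card := by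
      rw [add_comm]; exact (Finset.card_sdiff_add_card_eq_card hBN).symm
    have h2 := Mk_turan_step k B.card (N \ B).card (by
      rintro rfl
      by_contra hne
      obtain ⟨y, hy⟩ := Finset.card_pos.1 (Nat.pos_of_ne_zero hne)
      refine hind {y} (by simpa using hy) ?_ (by simp)
      intro a ha b hb
      simp only [Finset.mem_singleton] at ha hb
      subst ha; subst hb; exact H.irrefl)
    rw [← hcard] at h2
    have h3 : B.card * (B.card - 1) ≤ ∑ y ∈ B, dg H N y := by
      rw [← smul_eq_mul]
      apply Finset.card_nsmul_le_sum
      intro y hy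
      rw [hBc, Nat.add_sub_cancel]
      exact hmin y (hBN hy)
    have h4 : EE H (N \ B) ≤ ∑ y ∈ N \ B, dg H N y :=
      Finset.sum_le_sum fun y _ => dg_mono H Finset.sdiff_subset y
    have h5 : EE H N = ∑ x ∈ N \ B, dg H N x + ∑ x ∈ B, dg H N x :=
      (Finset.sum_sdiff hBN).symm
    omega

lemma exists_ind (k : ℕ) (A : Finset V) (x : V) (hx : x ∈ A)
    (hE : EE H A < 2 * (dg H A x + Mk (A.card - 1 - dg H A x) k)) :
    ∃ S ⊆ A, x ∈ S ∧ Ind H S ∧ S.card = k + 2 := by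
  classical
  by_contra hcon
  push Not at hcon
  have hxi : Ind H {x} := by
    intro a ha b hb
    simp only [Finset.mem_singleton] at ha hb
    subst ha; subst hb; exact H.irrefl
  have h1 := EE_split H (Finset.singleton_subset_iff.2 hx) hxi
  rw [Finset.sum_singleton] at h1
  set N := (A \ {x}).filter (fun y => ¬ H.Adj x y) with hN
  have h2 : EE H N ≤ EE H (A \ {x}) := EE_mono H (Finset.filter_subset _ _)
  have hNc : N.card = A.card - 1 - dg H A x := by
    have e1 := Finset.card_filter_add_card_filter_not (s := A \ {x}) (fun y => H.Adj x y)
    have e2 : (A \ {x}).card = A.card - 1 := by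
      rw [Finset.card_sdiff_of_subset (Finset.singleton_subset_iff.2 hx), Finset.card_singleton]
    have e3 : ((A \ {x}).filter (fun y => H.Adj x y)).card = dg H A x := by
      unfold dg
      congr 1
      ext y
      simp only [Finset.mem_filter, Finset.mem_sdiff, Finset.mem_singleton]
      constructor
      · tauto
      · rintro ⟨h, h'⟩; exact ⟨⟨h, h'.ne'⟩, h'⟩
    have e4 : dg H A x + N.card = (A \ {x}).card := by
      rw [← e1, ← e3, hN]
    omega
  have h3 := turan_lower H k N (by
    intro S hSN hS hc
    have hnot : ∀ y ∈ S, y ∈ A ∧ ¬ H.Adj x y ∧ y ≠ x := by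
      intro y hy
      have := hSN hy
      simp only [hN, Finset.mem_sdiff, Finset.mem_singleton, Finset.mem_filter] at this
      exact ⟨this.1.1, this.2, this.1.2⟩
    refine hcon (insert x S) ?_ (Finset.mem_insert_self _ _) ?_ ?_
    · intro y hy
      rcases Finset.mem_insert.1 hy with rfl | hy
      · exact hx
      · exact (hnot y hy).1
    · intro a ha b hb
      rcases Finset.mem_insert.1 ha with rfl | ha1 <;> rcases Finset.mem_insert.1 hb with rfl | hb1
      · exact H.irrefl
      · exact (hnot b hb1).2.1
      · exact fun h => (hnot a ha1).2.1 h.symm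
      · exact hS a ha1 b hb1
    · rw [Finset.card_insert_of_notMem (fun h => (hnot x h).2.2 rfl), hc])
  rw [hNc] at h3
  omega

lemma num2 (k M a c s E E1 : ℕ) (hM : 1 ≤ M) (h1 : E = E1 + 2 * s)
    (h2 : E ≤ s + (k+2) * M * a + s * c) (h3 : (a + c) + (k+1) * a ≤ s) (h4 : s ≤ M) :
    E1 < M * (M+1) := by
  obtain ⟨v, rfl⟩ := Nat.exists_eq_add_of_le h4
  obtain ⟨w, hw⟩ := Nat.exists_eq_add_of_le h3
  have e1 : (k+2) * a ≤ s := by nlinarith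
  have e2 : v * ((k+2) * a) ≤ v * s := Nat.mul_le_mul_left _ e1
  have e3 : s * ((k+2) * a) + s * c ≤ s * s := by
    rw [← mul_add]; apply Nat.mul_le_mul_left; nlinarith
  nlinarith

lemma step (k M : ℕ) (hk : 1 ≤ k) (A : Finset V) (hA : A.card = (k+2) * (M+1))
    (hE : EE H A < (M+1) * (M+2))
    (hP : ∀ x ∈ A, EE H A < 2 * (dg H A x + Mk (A.card - 1 - dg H A x) k)) :
    ∃ S ⊆ A, Ind H S ∧ S.card = k + 2 ∧ (M = 0 ∨ (EE H (A \ S) < M * (M+1) ∧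
      ∀ x ∈ A \ S, EE H (A \ S) <
        2 * (dg H (A \ S) x + Mk ((A \ S).card - 1 - dg H (A \ S) x) k))) := by
  classical
  have hne : A.Nonempty := by
    apply Finset.card_pos.1; rw [hA]; positivity
  have hdlt : ∀ (B : Finset V), ∀ x ∈ B, dg H B x + 1 ≤ B.card := by
    intro B x hx
    have : (B.filter (fun y => H.Adj x y)) ⊂ B := by
      refine Finset.filter_ssubset.2 ⟨x, hx, H.irrefl⟩
    exact Finset.card_lt_card this
  obtain ⟨x0, hx0, hmax⟩ := Finset.exists_max_image A (dg H A) hne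
  obtain ⟨S0, hS0A, hxS0, hS0, hS0c⟩ := exists_ind H k A x0 hx0 (hP x0 hx0)
  let C := A.powerset.filter (fun S => x0 ∈ S ∧ Ind H S ∧ S.card = k + 2)
  obtain ⟨S, hSC, hSmax⟩ := Finset.exists_max_image C (fun S => ∑ x ∈ S, dg H A x)
    ⟨S0, by simp only [C, Finset.mem_filter, Finset.mem_powerset]; exact ⟨hS0A, hxS0, hS0, hS0c⟩⟩
  simp only [C, Finset.mem_filter, Finset.mem_powerset] at hSC hSmax
  obtain ⟨hSA, hxS, hS, hSc⟩ := hSC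
  refine ⟨S, hSA, hS, hSc, ?_⟩
  rcases Nat.eq_zero_or_pos M with hM | hM
  · exact Or.inl hM
  right
  -- swapping
  have hswap : ∀ y ∈ A \ S, dg H S y = 0 → ∀ z ∈ S.erase x0, dg H A y ≤ dg H A z := by
    intro y hy hy0 z hz
    obtain ⟨hzx, hzS⟩ := Finset.mem_erase.1 hz
    obtain ⟨hyA, hyS⟩ := Finset.mem_sdiff.1 hy
    have hyS' : ∀ w ∈ S, ¬ H.Adj y w := by
      unfold dg at hy0
      rw [Finset.card_eq_zero, Finset.filter_eq_empty_iff] at hy0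
      exact fun w hw => hy0 hw
    have hynot : y ∉ S.erase z := fun h => hyS (Finset.mem_of_mem_erase h)
    have := hSmax (insert y (S.erase z)) ⟨?_, ?_, ?_, ?_⟩
    · rw [Finset.sum_insert hynot, ← Finset.add_sum_erase S _ hzS] at this
      omega
    · intro w hw
      rcases Finset.mem_insert.1 hw with rfl | hw
      · exact hyA
      · exact hSA (Finset.mem_of_mem_erase hw)
    · exact Finset.mem_insert_of_mem (Finset.mem_erase.2 ⟨hzx.symm, hxS⟩)
    · intro a ha b hb
      rcases Finset.mem_insert.1 ha with rfl | ha1 <;> rcases Finset.mem_insert.1 hb with rfl | hb1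
      · exact H.irrefl
      · exact hyS' b (Finset.mem_of_mem_erase hb1)
      · exact fun h => hyS' a (Finset.mem_of_mem_erase ha1) h.symm
      · exact hS a (Finset.mem_of_mem_erase ha1) b (Finset.mem_of_mem_erase hb1)
    · rw [Finset.card_insert_of_notMem hynot, Finset.card_erase_of_mem hzS, hSc]; rfl
  have hsum := Finset.add_sum_erase S (dg H A) hxS
  have hec : (S.erase x0).card = k + 1 := by rw [Finset.card_erase_of_mem hxS, hSc]; rfl
  have hlow : ∀ a, (∀ z ∈ S.erase x0, a ≤ dg H A z) →
      dg H A x0 + (k+1) * a ≤ ∑ x ∈ S, dg H A x := by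
    intro a ha
    rw [← hsum, ← hec, ← smul_eq_mul]
    exact Nat.add_le_add_left (Finset.card_nsmul_le_sum _ _ _ ha) _
  have hsplit := EE_split H hSA hS
  have hcard : (A \ S).card = (k+2) * M := by
    rw [Finset.card_sdiff_of_subset hSA, hA, hSc, Nat.mul_succ, Nat.add_sub_cancel]
  have hE1 : EE H (A \ S) < M * (M+1) := by
    rcases le_or_gt (∑ x ∈ S, dg H A x) M with hs | hs
    · obtain ⟨z, hz, hzmin⟩ := Finset.exists_min_image (S.erase x0) (dg H A)
        (Finset.card_pos.1 (by omega))
      have hza : dg H A z ≤ dg H A x0 := hmax z (hSA (Finset.mem_of_mem_erase hz))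
      obtain ⟨c, hc⟩ := Nat.exists_eq_add_of_le hza
      have h3 := hlow _ hzmin
      rw [hc] at h3
      refine num2 k M (dg H A z) c _ _ _ hM hsplit ?_ h3 hs
      have h1 : EE H A = ∑ x ∈ A \ S, dg H A x + ∑ x ∈ S, dg H A x :=
        (Finset.sum_sdiff hSA).symm
      have h2 : ∑ x ∈ A \ S, dg H A x ≤ ∑ x ∈ A \ S, (dg H A z + dg H S x * c) := by
        apply Finset.sum_le_sum
        intro y hy
        rcases Nat.eq_zero_or_pos (dg H S y) with h | h
        · have := hswap y hy h z hz
          omega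
        · have := hmax y (Finset.mem_sdiff.1 hy).1
          have := Nat.mul_le_mul_right c h
          omega
      rw [Finset.sum_add_distrib, Finset.sum_const, hcard, ← Finset.sum_mul,
        sum_cross H hSA hS, smul_eq_mul] at h2
      omega
    · have : (M+1) * (M+2) = M * (M+1) + 2 * (M+1) := by ring
      omega
  refine ⟨hE1, ?_⟩
  · intro x1 hx1
    rw [hcard]
    have hd1 := hdlt _ x1 hx1
    rw [hcard] at hd1
    have hd0 := hdlt _ x0 hx0
    have hP0 := hP x0 hx0
    rw [hA] at hP0 hd0
    by_contra hcon
    push Not at hcon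
    rcases lt_or_ge (dg H (A \ S) x1) M with hlt | hge
    · have := Mk_auto k M _ ((k+2) * M - 1 - dg H (A \ S) x1) hk hlt (by omega)
      omega
    · have hx1A := (Finset.mem_sdiff.1 hx1).1
      have hds := dg_split H hSA x1
      have hm1 := hmax x1 hx1A
      have hs0 := hlow 0 (fun _ _ => Nat.zero_le _)
      rcases Nat.eq_zero_or_pos (dg H S x1) with h | h
      · have h2 := hlow _ (hswap x1 hx1 h)
        rw [hds, h, add_zero] at h2
        exact num0 k M (dg H A x0) (dg H (A \ S) x1) ((k+2) * (M+1) - 1 - dg H A x0)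
          ((k+2) * M - 1 - dg H (A \ S) x1) (EE H A) (EE H (A \ S)) hk (by omega) (by omega)
          (by omega) (by omega) hcon hP0 hE hge
      · exact num1 k M (dg H A x0) (dg H (A \ S) x1) ((k+2) * (M+1) - 1 - dg H A x0)
          ((k+2) * M - 1 - dg H (A \ S) x1) (EE H A) (EE H (A \ S)) hk (by omega) (by omega)
          (by omega) (by omega) hcon hP0 hE hge

lemma packing (k : ℕ) (hk : 1 ≤ k) : ∀ (m : ℕ) (A : Finset V), A.card = (k+2) * m →
    (m = 0 ∨ (EE H A < m * (m+1) ∧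
      ∀ x ∈ A, EE H A < 2 * (dg H A x + Mk (A.card - 1 - dg H A x) k))) →
    ∃ P : Finset (Finset V), (∀ p ∈ P, p.card = k + 2 ∧ Ind H p) ∧
      (P : Set (Finset V)).PairwiseDisjoint id ∧ P.biUnion id = A := by
  intro m
  induction m with
  | zero =>
    intro A hA _
    have : A = ∅ := Finset.card_eq_zero.1 (by simpa using hA)
    exact ⟨∅, by simp, by simp, by simp [this]⟩
  | succ M ih =>
    intro A hA h
    rcases h with h | ⟨hE, hP⟩
    · omega
    obtain ⟨S, hSA, hS, hSc, hrest⟩ := step H k M hk A hA hE hP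
    have hcard : (A \ S).card = (k+2) * M := by
      rw [Finset.card_sdiff_of_subset hSA, hA, hSc, Nat.mul_succ, Nat.add_sub_cancel]
    obtain ⟨P, hP1, hP2, hP3⟩ := ih (A \ S) hcard hrest
    refine ⟨insert S P, ?_, ?_, ?_⟩
    · intro p hp
      rcases Finset.mem_insert.1 hp with rfl | hp
      · exact ⟨hSc, hS⟩
      · exact hP1 p hp
    · rw [Finset.coe_insert]
      refine hP2.insert ?_
      intro p hp _
      have : p ⊆ A \ S := by
        rw [← hP3]; exact Finset.subset_biUnion_of_mem id hp
      exact Finset.disjoint_of_subset_right this Finset.disjoint_sdiff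
    · rw [Finset.biUnion_insert, hP3]
      exact Finset.union_sdiff_of_subset hSA
end graph

open Classical in
lemma sym_sum (R : ℕ → ℕ → Prop) (hs : ∀ i j, R i j ↔ R j i) (hi : ∀ i, ¬ R i i) (n : ℕ) :
    ∑ j ∈ Finset.range n, ((Finset.range n).filter (fun i => R j i)).card =
      2 * ∑ j ∈ Finset.range n, ((Finset.range j).filter (fun i => R i j)).card := by
  simp_rw [Finset.card_filter]
  induction n with
  | zero => simp
  | succ n ih =>
    simp_rw [Finset.sum_range_succ _ n, Finset.sum_add_distrib]
    rw [ih, if_neg (hi n)]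
    have : ∑ x ∈ Finset.range n, (if R x n then 1 else 0) =
      ∑ x ∈ Finset.range n, (if R n x then 1 else 0) := by
      refine Finset.sum_congr rfl fun x _ => ?_
      simp only [hs x n]
    rw [this]; ring

lemma two_edgeCount {n : ℕ} (G : SimpleGraph (Fin n)) : 2 * edgeCount G = ∑ v, deg G v := by
  classical
  have h := G.sum_degrees_eq_twice_card_edges
  unfold edgeCount deg
  rw [Nat.card_eq_fintype_card, ← SimpleGraph.edgeFinset_card, ← h]
  refine Finset.sum_congr rfl fun v _ => ?_
  rw [Nat.card_eq_fintype_card, SimpleGraph.card_neighborSet_eq_degree]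

open Classical in
lemma deg_eq {n : ℕ} (G : SimpleGraph (Fin n)) (v : Fin n) :
    deg G v = (Finset.univ.filter (fun w => G.Adj v w)).card := by
  unfold deg
  rw [Nat.card_eq_fintype_card, ← Set.toFinset_card]
  congr 1
  ext w
  simp

lemma filter_range_card {n : ℕ} (p : ℕ → Prop) [DecidablePred p]
    [DecidablePred (fun w : Fin n => p w)] :
    (Finset.univ.filter (fun w : Fin n => p w)).card = ((Finset.range n).filter p).card := by
  rw [← Finset.card_map Fin.valEmbedding]
  congr 1
  ext i
  simp only [Finset.mem_map, Finset.mem_filter, Finset.mem_univ, true_and, Finset.mem_range,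
    Fin.valEmbedding_apply]
  constructor
  · rintro ⟨a, h, rfl⟩; exact ⟨a.2, h⟩
  · rintro ⟨h, h'⟩; exact ⟨⟨i, h⟩, h', rfl⟩

lemma edgeCount_fin {n : ℕ} (G : SimpleGraph (Fin n)) (R : ℕ → ℕ → Prop)
    [∀ j, DecidablePred (fun i => R i j)]
    (hs : ∀ i j, R i j ↔ R j i) (hi : ∀ i, ¬ R i i)
    (h : ∀ i j : Fin n, G.Adj i j ↔ R i j) :
    edgeCount G = ∑ j ∈ Finset.range n, ((Finset.range j).filter (fun i => R i j)).card := by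
  classical
  have h1 := two_edgeCount G
  have h2 := sym_sum R hs hi n
  rw [Finset.sum_range] at h2
  have : ∑ v, deg G v = ∑ v : Fin n, ((Finset.range n).filter (fun i => R v i)).card := by
    refine Finset.sum_congr rfl fun v _ => ?_
    rw [deg_eq, ← filter_range_card (fun i => R v i)]
    simp_rw [h]
  have h4 : 2 * edgeCount G = 2 * ∑ j ∈ Finset.range n,
      ((Finset.range j).filter (fun i => R i j)).card := by
    rw [h1, this]
    convert h2
  exact Nat.eq_of_mul_eq_mul_left (by omega) h4

lemma deg_add {n : ℕ} (G : SimpleGraph (Fin n)) (v : Fin n)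
    [DecidablePred (fun w => ¬ G.Adj v w)] :
    deg G v + (Finset.univ.filter (fun w => ¬ G.Adj v w)).card = n := by
  classical
  rw [deg_eq]
  have := Finset.card_filter_add_card_filter_not (s := (Finset.univ : Finset (Fin n)))
    (fun w => G.Adj v w)
  rw [Finset.card_univ, Fintype.card_fin] at this
  convert this

lemma two_choose (a : ℕ) : 2 * Nat.choose (a+1) 2 = (a+1) * a := by
  rw [Nat.choose_two_right, Nat.add_sub_cancel]
  apply Nat.mul_div_cancel'
  rw [mul_comm]; exact (Nat.even_mul_succ_self a).two_dvd

lemma turan_count (D k : ℕ) (hk : 1 ≤ k) :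
    edgeCount (SimpleGraph.turanGraph D k) + Mk D k = Nat.choose D 2 := by
  classical
  rw [edgeCount_fin _ (fun i j => i % k ≠ j % k) (fun i j => ne_comm) (by simp)
    (fun i j => Iff.rfl)]
  unfold Mk
  rw [← Finset.sum_add_distrib]
  have : ∀ j, ((Finset.range j).filter (fun i => i % k ≠ j % k)).card + j / k = j := by
    intro j
    have h1 := Finset.card_filter_add_card_filter_not (s := Finset.range j)
      (fun i => i % k = j % k)
    have h2 := Nat.count_modEq_card j (show 0 < k by omega) j
    rw [Nat.count_eq_card_filter_range, if_neg (lt_irrefl _), add_zero] at h2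
    have h3 : ((Finset.range j).filter (fun i => i % k = j % k)).card = j / k := by
      rw [← h2]; congr 1
    rw [Finset.card_range] at h1
    have h4 : ((Finset.range j).filter (fun i => ¬ i % k = j % k)).card =
      ((Finset.range j).filter (fun i => i % k ≠ j % k)).card := by congr 1
    omega
  rw [Finset.sum_congr rfl (fun j _ => this j), Finset.sum_range_id, Nat.choose_two_right]

lemma Mk_grow (k D j : ℕ) (hk : 1 ≤ k) (h : k ≤ D) : Mk D k + j ≤ Mk (D + j) k := by
  induction j with
  | zero => simp
  | succ j ih =>
    rw [show D + (j + 1) = D + j + 1 by ring, Mk_succ]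
    have := Nat.div_pos (show k ≤ D + j by omega) hk
    omega

lemma choose_decomp (n D : ℕ) (h : D + 1 ≤ n) :
    Nat.choose n 2 = D * (n - D) + Nat.choose (n-1-D) 2 + Nat.choose D 2 + (n-1-D) := by
  obtain ⟨L, rfl⟩ := Nat.exists_eq_add_of_le h
  have e1 : D + 1 + L - D = L + 1 := by omega
  have e2 : D + 1 + L - 1 - D = L := by omega
  rw [e1, e2]
  have h1 := two_choose (D + L)
  rw [show D + L + 1 = D + 1 + L by ring] at h1
  have h2 : 2 * Nat.choose D 2 + D = D * D := by
    cases D with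
    | zero => simp
    | succ D => rw [two_choose]; ring
  have h3 : 2 * Nat.choose L 2 + L = L * L := by
    cases L with
    | zero => simp
    | succ L => rw [two_choose]; ring
  nlinarith

lemma upper (n k m D : ℕ) (hk : 1 ≤ k) (hn : n = (k+2) * m) (hm : 1 ≤ m) (hD1 : k + 1 ≤ D)
    (hD2 : D + 1 ≤ (k+1) * m) (G : SimpleGraph (Fin n)) (hdeg : ∀ v, D ≤ deg G v)
    (he1 : Nat.choose n 2 - Nat.choose (m+1) 2 < edgeCount G)
    (he2 : D * (n - D) + Nat.choose (n - 1 - D) 2 + edgeCount (SimpleGraph.turanGraph D k)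
      < edgeCount G) : HasPerfectKrPacking G (k+2) := by
  classical
  have hDn : D + 1 ≤ n := by rw [hn]; nlinarith
  have hdg : ∀ v, dg Gᶜ Finset.univ v + deg G v + 1 = n := by
    intro v
    have h1 := deg_add G v
    have h2 : (Finset.univ.filter (fun w => ¬ G.Adj v w)) =
        insert v (Finset.univ.filter (fun w => Gᶜ.Adj v w)) := by
      ext w
      simp only [Finset.mem_filter, Finset.mem_univ, true_and, Finset.mem_insert,
        SimpleGraph.compl_adj]
      constructor
      · intro h
        by_cases hw : w = v
        · exact Or.inl hw
        · exact Or.inr ⟨fun h' => hw h'.symm, h⟩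
      · rintro (rfl | h)
        · exact G.irrefl
        · exact h.2
    have h3 : (Finset.univ.filter (fun w => ¬ G.Adj v w)).card =
        dg Gᶜ Finset.univ v + 1 := by
      rw [h2, Finset.card_insert_of_notMem (by simp)]
      unfold dg; congr!
    omega
  have hEE : EE Gᶜ Finset.univ + 2 * edgeCount G + n = n * n := by
    rw [two_edgeCount]
    unfold EE
    have : ∑ v : Fin n, (dg Gᶜ Finset.univ v + deg G v + 1) = ∑ v : Fin n, n :=
      Finset.sum_congr rfl fun v _ => hdg v
    rw [Finset.sum_add_distrib, Finset.sum_add_distrib] at this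
    simpa using this
  have hc : 2 * Nat.choose n 2 + n = n * n := by
    obtain ⟨c, hc⟩ := Nat.exists_eq_add_of_le' (show 1 ≤ n by omega)
    rw [hc, two_choose]; ring
  have hc2 := two_choose m
  have hdec := choose_decomp n D hDn
  have ht := turan_count D k hk
  obtain ⟨P, h1, h2, h3⟩ := packing Gᶜ k hk m Finset.univ (by simp [hn]) (by
    right
    refine ⟨by rw [mul_comm]; omega, ?_⟩
    intro x _
    rw [Finset.card_univ, Fintype.card_fin]
    have hx := hdg x
    have hDx := hdeg x
    have hg := Mk_grow k D (n - 1 - dg Gᶜ Finset.univ x - D) hk (by omega)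
    rw [show D + (n - 1 - dg Gᶜ Finset.univ x - D) = n - 1 - dg Gᶜ Finset.univ x by omega] at hg
    omega)
  refine ⟨P, ?_, h2, h3⟩
  intro p hp
  refine ⟨(h1 p hp).1, ?_⟩
  intro x hx y hy hxy
  have := (h1 p hp).2 x hx y hy
  rw [SimpleGraph.compl_adj] at this
  by_contra hcon
  exact this ⟨hxy, hcon⟩

lemma lower1 (n k m D : ℕ) (hn : n = (k+2) * m) (hm : 1 ≤ m)
    (hD2 : D + 1 ≤ (k+1) * m) :
    ∃ G' : SimpleGraph (Fin n), (∀ v, D ≤ deg G' v) ∧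
      edgeCount G' = Nat.choose n 2 - Nat.choose (m+1) 2 ∧ ¬ HasPerfectKrPacking G' (k+2) := by
  classical
  have hmn : m + 1 + D ≤ n := by rw [hn]; nlinarith
  let G' : SimpleGraph (Fin n) :=
    { Adj := fun i j => (i:ℕ) ≠ j ∧ ¬ ((i:ℕ) ≤ m ∧ (j:ℕ) ≤ m)
      symm := ⟨fun i j h => ⟨h.1.symm, fun h' => h.2 ⟨h'.2, h'.1⟩⟩⟩
      loopless := ⟨fun i h => h.1 rfl⟩ }
  have hI : (Finset.univ.filter (fun w : Fin n => (w:ℕ) ≤ m)).card = m + 1 := by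
    rw [filter_range_card (fun i => i ≤ m)]
    have : (Finset.range n).filter (fun i => i ≤ m) = Finset.range (m+1) := by
      ext i; simp only [Finset.mem_filter, Finset.mem_range]; omega
    rw [this, Finset.card_range]
  refine ⟨G', ?_, ?_, ?_⟩
  · intro v
    have h1 := deg_add G' v
    have h2 : (Finset.univ.filter (fun w => ¬ G'.Adj v w)).card ≤ m + 1 := by
      by_cases hv : (v:ℕ) ≤ m
      · rw [← hI]
        apply Finset.card_le_card
        intro w
        simp only [Finset.mem_filter, Finset.mem_univ, true_and, G']
        intro h
        omega
      · calc _ ≤ ({v} : Finset (Fin n)).card := by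
              apply Finset.card_le_card
              intro w
              simp only [Finset.mem_filter, Finset.mem_univ, true_and, G', Finset.mem_singleton]
              intro h
              apply Fin.ext
              omega
          _ ≤ m + 1 := by simp
    omega
  · rw [edgeCount_fin G' (fun i j => i ≠ j ∧ ¬ (i ≤ m ∧ j ≤ m)) (fun i j => by omega)
      (fun i => by omega) (fun i j => Iff.rfl)]
    obtain ⟨L, hL⟩ := Nat.exists_eq_add_of_le (show m + 1 ≤ n by omega)
    have h1 : ∑ j ∈ Finset.range n,
        ((Finset.range j).filter (fun i => i ≠ j ∧ ¬ (i ≤ m ∧ j ≤ m))).card +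
        ∑ j ∈ Finset.range (m+1), j = ∑ j ∈ Finset.range n, j := by
      rw [hL, Finset.sum_range_add, Finset.sum_range_add _ (m+1) L]
      have e1 : ∑ j ∈ Finset.range (m+1),
        ((Finset.range j).filter (fun i => i ≠ j ∧ ¬ (i ≤ m ∧ j ≤ m))).card = 0 := by
        apply Finset.sum_eq_zero
        intro j hj
        rw [Finset.card_eq_zero, Finset.filter_eq_empty_iff]
        intro i hi
        rw [Finset.mem_range] at hi hj
        omega
      have e2 : ∀ x ∈ Finset.range L, ((Finset.range (m+1+x)).filter
          (fun i => i ≠ m+1+x ∧ ¬ (i ≤ m ∧ m+1+x ≤ m))).card = m + 1 + x := by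
        intro x _
        rw [Finset.filter_true_of_mem, Finset.card_range]
        intro i hi
        rw [Finset.mem_range] at hi
        omega
      rw [e1, Finset.sum_congr rfl e2]
      ring
    rw [Finset.sum_range_id, Finset.sum_range_id, ← Nat.choose_two_right,
      ← Nat.choose_two_right] at h1
    omega
  · rintro ⟨P, h1, h2, h3⟩
    have hcard : n = P.card * (k+2) := by
      have : (P.biUnion id).card = ∑ p ∈ P, (id p).card := Finset.card_biUnion h2
      rw [h3, Finset.card_univ, Fintype.card_fin,
        Finset.sum_congr rfl (fun p hp => show (id p).card = k + 2 from (h1 p hp).1), Finset.sum_const, smul_eq_mul] at this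
      exact this
    have hPm : P.card = m := by
      have h5 : P.card * (k+2) = m * (k+2) := by rw [← hcard, mul_comm m]; exact hn
      exact Nat.eq_of_mul_eq_mul_right (by omega) h5
    have : (Finset.univ.filter (fun w : Fin n => (w:ℕ) ≤ m)).card ≤ P.card * 1 := by
      have hsub : Finset.univ.filter (fun w : Fin n => (w:ℕ) ≤ m) ⊆
          P.biUnion (fun p => p.filter (fun w : Fin n => (w:ℕ) ≤ m)) := by
        intro w hw
        have hw2 : w ∈ P.biUnion id := by rw [h3]; exact Finset.mem_univ _
        obtain ⟨p, hp, hwp⟩ := Finset.mem_biUnion.1 hw2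
        exact Finset.mem_biUnion.2 ⟨p, hp, Finset.mem_filter.2 ⟨hwp, (Finset.mem_filter.1 hw).2⟩⟩
      refine (Finset.card_le_card hsub).trans (Finset.card_biUnion_le_card_mul _ _ _ ?_)
      intro p hp
      rw [Finset.card_le_one]
      intro a ha b hb
      by_contra hab
      rw [Finset.mem_filter] at ha hb
      have := (h1 p hp).2 ha.1 hb.1 hab
      exact this.2 ⟨ha.2, hb.2⟩
    omega

lemma lower2 (n k m D : ℕ) (hk : 1 ≤ k) (hn : n = (k+2) * m) (hm : 1 ≤ m) (hD1 : k + 1 ≤ D)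
    (hD2 : D + 1 ≤ (k+1) * m)
    (hlt : Nat.choose n 2 - Nat.choose (m+1) 2 < D * (n - D) + Nat.choose (n - 1 - D) 2 +
      edgeCount (SimpleGraph.turanGraph D k)) :
    ∃ G' : SimpleGraph (Fin n), (∀ v, D ≤ deg G' v) ∧
      edgeCount G' = D * (n - D) + Nat.choose (n - 1 - D) 2 +
      edgeCount (SimpleGraph.turanGraph D k) ∧ ¬ HasPerfectKrPacking G' (k+2) := by
  classical
  have hmn : m + 1 + D ≤ n := by rw [hn]; nlinarith
  have hdec := choose_decomp n D (by omega)
  have ht := turan_count D k hk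
  have hc2 := two_choose m
  have hMk : 2 * Mk D k < (m+1) * m := by omega
  have hDk : D < k * (m+1) + 1 := by
    by_contra hcon
    push Not at hcon
    have h1 := Mk_lower k hk D (m+1)
    have h2 := Nat.mul_le_mul_left (2 * (m+1)) hcon
    nlinarith [Nat.zero_le (k * m * (m+1))]
  let R : ℕ → ℕ → Prop := fun i j => i ≠ j ∧ (i < D → j < D → i % k ≠ j % k) ∧
    (i = n - 1 → j < D) ∧ (j = n - 1 → i < D)
  have hRs : ∀ i j, R i j → R j i := fun i j h =>
    ⟨h.1.symm, fun a b => (h.2.1 b a).symm, h.2.2.2, h.2.2.1⟩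
  let G' : SimpleGraph (Fin n) :=
    { Adj := fun i j => R i j
      symm := ⟨fun i j h => hRs _ _ h⟩
      loopless := ⟨fun i h => h.1 rfl⟩ }
  refine ⟨G', ?_, ?_, ?_⟩
  · intro v
    have h1 := deg_add G' v
    have h2 : (Finset.univ.filter (fun w => ¬ G'.Adj v w)).card ≤ n - D := by
      have h3 : (Finset.univ.filter (fun w => ¬ G'.Adj v w)).card =
        ((Finset.range n).filter (fun w => ¬ R v w)).card := filter_range_card (fun w => ¬ R v w)
      rw [h3]
      have hvn := v.2
      rcases lt_or_ge (v:ℕ) D with hv | hv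
      · have h4 : (Finset.range n).filter (fun w => ¬ R v w) ⊆
            (Finset.range D).filter (fun w => w ≡ v [MOD k]) := by
          intro w
          simp only [Finset.mem_filter, Finset.mem_range]
          rintro ⟨hw, h⟩
          by_cases hwD : w < D
          · refine ⟨hwD, ?_⟩
            by_contra hne
            apply h
            refine ⟨?_, fun _ _ h' => hne h'.symm, by omega, by omega⟩
            intro h'
            exact hne (by rw [h'])
          · exfalso
            apply h
            exact ⟨by omega, by omega, by omega, by omega⟩
        have h5 := Nat.count_modEq_card D (show 0 < k by omega) v
        rw [Nat.count_eq_card_filter_range] at h5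
        have h6 := Finset.card_le_card h4
        have h7 := Nat.div_add_mod D k
        have h8 : D / k + (if (v:ℕ) % k < D % k then 1 else 0) ≤ m + 1 := by
          split_ifs with hh
          · by_contra hcon
            have := Nat.mul_le_mul_left k (show m + 1 ≤ D / k by omega)
            omega
          · by_contra hcon
            have := Nat.mul_le_mul_left k (show m + 2 ≤ D / k by omega)
            have e : k * (m+2) = k * (m+1) + k := by ring
            omega
        have h9 : ((Finset.range D).filter (fun w => w ≡ v [MOD k])).card ≤ m + 1 := by
          rw [← h5] at h8; convert h8
        omega
      · by_cases hvl : (v:ℕ) = n - 1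
        · have : (Finset.range n).filter (fun w => ¬ R v w) ⊆ Finset.Ico D n := by
            intro w
            simp only [Finset.mem_filter, Finset.mem_range, Finset.mem_Ico]
            rintro ⟨hw, h⟩
            refine ⟨?_, hw⟩
            by_contra hcon
            exact h ⟨by omega, by omega, by omega, by omega⟩
          simpa using Finset.card_le_card this
        · have : (Finset.range n).filter (fun w => ¬ R v w) ⊆ {(v:ℕ), n-1} := by
            intro w
            simp only [Finset.mem_filter, Finset.mem_range, Finset.mem_insert,
              Finset.mem_singleton]
            rintro ⟨hw, h⟩
            by_contra hcon
            exact h ⟨by omega, by omega, by omega, by omega⟩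
          have h5 := Finset.card_le_card this
          have h6 := Finset.card_le_two (a := (v:ℕ)) (b := n-1)
          omega
    omega
  · rw [edgeCount_fin G' R (fun i j => ⟨hRs i j, hRs j i⟩) (fun i h => h.1 rfl)
      (fun i j => Iff.rfl)]
    rw [edgeCount_fin (SimpleGraph.turanGraph D k) (fun i j => i % k ≠ j % k)
      (fun i j => ne_comm) (by simp) (fun i j => Iff.rfl)]
    obtain ⟨L, hL⟩ := Nat.exists_eq_add_of_le (show D + 1 ≤ n by omega)
    have hL' : n = D + L + 1 := by omega
    have e0 : ∀ f : ℕ → ℕ, ∑ j ∈ Finset.range n, f j =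
        ∑ j ∈ Finset.range D, f j + ∑ x ∈ Finset.range L, f (D + x) + f (D+L) := by
      intro f
      rw [hL', Finset.sum_range_succ, Finset.sum_range_add]
    rw [e0]
    have e1 : ∀ j ∈ Finset.range D, ((Finset.range j).filter (fun i => R i j)).card =
        ((Finset.range j).filter (fun i => i % k ≠ j % k)).card := by
      intro j hj
      congr 1
      ext i
      simp only [Finset.mem_filter, Finset.mem_range] at hj ⊢
      constructor
      · rintro ⟨h, h'⟩; exact ⟨h, h'.2.1 (by omega) hj⟩
      · rintro ⟨h, h'⟩; exact ⟨h, by omega, fun _ _ => h', by omega, by omega⟩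
    have e2 : ∀ x ∈ Finset.range L,
        ((Finset.range (D+x)).filter (fun i => R i (D+x))).card = D + x := by
      intro x hx
      rw [Finset.filter_true_of_mem, Finset.card_range]
      intro i hi
      rw [Finset.mem_range] at hi hx
      exact ⟨by omega, by omega, by omega, by omega⟩
    have e3 : ((Finset.range (D+L)).filter (fun i => R i (D+L))).card = D := by
      have : (Finset.range (D+L)).filter (fun i => R i (D+L)) = Finset.range D := by
        ext i
        simp only [Finset.mem_filter, Finset.mem_range]
        constructor
        · rintro ⟨h, h'⟩; exact h'.2.2.2 (by omega)
        · intro h; exact ⟨by omega, by omega, by omega, by omega, by omega⟩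
      rw [this, Finset.card_range]
    rw [Finset.sum_congr rfl e1, Finset.sum_congr rfl e2, e3, Finset.sum_add_distrib,
      Finset.sum_range_id, ← Nat.choose_two_right, Finset.sum_const, Finset.card_range,
      smul_eq_mul, show n - D = L + 1 by omega, show n - 1 - D = L by omega]
    ring
  · rintro ⟨P, h1, h2, h3⟩
    let v : Fin n := ⟨n-1, by omega⟩
    have hw2 : v ∈ P.biUnion id := by rw [h3]; exact Finset.mem_univ _
    obtain ⟨p, hp, hvp⟩ := Finset.mem_biUnion.1 hw2
    obtain ⟨hpc, hpq⟩ := h1 p hp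
    have hvp' : v ∈ p := hvp
    have hec : (p.erase v).card = k + 1 := by rw [Finset.card_erase_of_mem hvp', hpc]; rfl
    have hltD : ∀ w ∈ p.erase v, (w:ℕ) < D := by
      intro w hw
      obtain ⟨hwv, hwp⟩ := Finset.mem_erase.1 hw
      have : R v w := hpq hvp' hwp hwv.symm
      exact this.2.2.1 rfl
    obtain ⟨a, ha, b, hb, hab, he⟩ := Finset.exists_ne_map_eq_of_card_lt_of_maps_to
      (s := p.erase v) (t := Finset.range k) (f := fun w : Fin n => (w:ℕ) % k)
      (by rw [hec, Finset.card_range]; omega)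
      (fun w _ => by simp only [Finset.coe_range, Set.mem_Iio]; exact Nat.mod_lt _ (by omega))
    have : R a b := hpq (Finset.mem_of_mem_erase ha) (Finset.mem_of_mem_erase hb) hab
    exact this.2.1 (hltD a ha) (hltD b hb) he

/-- Let `r ≥ 3` divide `n` and `r - 1 ≤ D ≤ (r-1)n/r - 1`. Every graph on `n` vertices with
minimum degree at least `D` and more than `g(n,r,D)` edges has a perfect `K_r`-packing, and
there is a graph with minimum degree at least `D` and exactly `g(n,r,D)` edges with no
perfect `K_r`-packing. -/
theorem stmt1 (n r D : ℕ) (hr : 3 ≤ r) (hdvd : r ∣ n) (hn : 0 < n)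
    (hD1 : r - 1 ≤ D) (hD2 : D ≤ (r - 1) * (n / r) - 1) :
    (∀ G : SimpleGraph (Fin n), (∀ v, D ≤ deg G v) →
      gFun n r D < edgeCount G → HasPerfectKrPacking G r) ∧
    (∃ G' : SimpleGraph (Fin n), (∀ v, D ≤ deg G' v) ∧
      edgeCount G' = gFun n r D ∧ ¬ HasPerfectKrPacking G' r) := by
  obtain ⟨k, rfl⟩ := Nat.exists_eq_add_of_le' (show 2 ≤ r by omega)
  obtain ⟨m, hm⟩ := hdvd
  have hk : 1 ≤ k := by omega
  have hm1 : 1 ≤ m := by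
    rcases Nat.eq_zero_or_pos m with h | h
    · subst h; omega
    · exact h
  have hdiv : n / (k+2) = m := by rw [hm]; exact Nat.mul_div_cancel_left m (by omega)
  have e1 : k + 2 - 1 = k + 1 := by omega
  have e2 : k + 2 - 2 = k := by omega
  rw [hdiv, e1] at hD2
  rw [e1] at hD1
  have hD2' : D + 1 ≤ (k+1) * m := by
    have : 0 < (k+1) * m := by positivity
    omega
  unfold gFun
  rw [hdiv, e2]
  constructor
  · intro G hdeg he
    exact upper n k m D hk hm hm1 hD1 hD2' G hdeg
      (lt_of_le_of_lt (le_max_left _ _) he) (lt_of_le_of_lt (le_max_right _ _) he)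
  · rcases le_or_gt (D * (n - D) + Nat.choose (n - 1 - D) 2 +
      edgeCount (SimpleGraph.turanGraph D k)) (Nat.choose n 2 - Nat.choose (m+1) 2) with h | h
    · rw [max_eq_left h]
      exact lower1 n k m D hm hm1 hD2'
    · rw [max_eq_right h.le]
      exact lower2 n k m D hk hm hm1 hD1 hD2' h
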